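/- For fixed positive reals y ≠ z, the function K ↦ (K(y−z) − z(1−(z/y)^K))/(y−z)^2, extended to real K ≥ 0, is strictly increasing in K. -/

import Mathlib

/-- For fixed positive reals `y ≠ z`, the extension of Naor's threshold-value function
`K ↦ (K(y−z) − z(1−(z/y)^K))/(y−z)²` to real `K ≥ 0` is strictly increasing. -/
theorem stmt_0 (y z : ℝ) (hy : 0 < y) (hz : 0 < z) (hne : y ≠ z) :
    StrictMonoOn
      (fun K : ℝ => (K * (y - z) - z * (1 - (z / y) ^ K)) / (y - z) ^ 2)
      (Set.Ici (0 : ℝ)) := by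
  intro a ha b _ hab
  have ha : 0 ≤ a := ha
  have hr : 0 < z / y := div_pos hz hy
  have hsq : 0 < (y - z) ^ 2 := by
    have := sub_ne_zero.mpr hne
    positivity
  refine div_lt_div_of_pos_right ?_ hsq
  rw [Real.rpow_def_of_pos hr, Real.rpow_def_of_pos hr]
  have hL : -Real.log (z / y) < y / z - 1 := by
    rw [← Real.log_inv, inv_div]
    refine Real.log_lt_sub_one_of_pos (div_pos hy hz) ?_
    intro h
    rw [div_eq_one_iff_eq hz.ne'] at h
    exact hne h
  generalize Real.log (z / y) = L at *
  have hzL : z - y < z * L := by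
    have h := mul_lt_mul_of_pos_left hL hz
    have h2 : z * (y / z - 1) = y - z := by field_simp
    linarith
  have hb : Real.exp (L * b) = Real.exp (L * a) * Real.exp (L * (b - a)) := by
    rw [← Real.exp_add]; ring_nf
  have h1 : L * (b - a) + 1 ≤ Real.exp (L * (b - a)) := Real.add_one_le_exp _
  have h2 : Real.exp (L * a) * (L * (b - a) + 1) ≤ Real.exp (L * b) := by
    rw [hb]; exact mul_le_mul_of_nonneg_left h1 (Real.exp_pos _).le
  have h3 : 0 ≤ (Real.exp (L * a) - 1) * L := by
    rcases le_total 0 L with h | h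
    · exact mul_nonneg (sub_nonneg.mpr (Real.one_le_exp (mul_nonneg h ha))) h
    · exact mul_nonneg_of_nonpos_of_nonpos
        (sub_nonpos.mpr (Real.exp_le_one_iff.mpr (mul_nonpos_of_nonpos_of_nonneg h ha))) h
  have hd : 0 < b - a := sub_pos.mpr hab
  have h4 := mul_nonneg h3 hd.le
  have h5 : L * (b - a) ≤ Real.exp (L * b) - Real.exp (L * a) := by linarith
  have h6 := mul_le_mul_of_nonneg_left h5 hz.le
  have h7 := mul_lt_mul_of_pos_right hzL hd
  linarith
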